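/- Let (X, μ) be a standard Borel space with a non-atomic Borel probability measure μ, and let U₁,…,U_n be pairwise disjoint Borel subsets of X, each of positive μ-measure. Then the restriction map Ψ : L⁰(μ,𝕋) → ∏ᵢ₌₁ⁿ L⁰(Uᵢ, μ/μ(Uᵢ), 𝕋) defined by Ψ(f) = (f↾U₁, …, f↾U_n) is continuous, open, and category preserving (the preimage under Ψ of every comeager set is comeager). -/

import Mathlib

/-!
The map `Ψ` is continuous because each restriction is Lipschitz with constant `μ(Uᵢ)⁻¹`. It is open
because every `f` lies in the image of a continuous section: glue `h` on the pieces `Uᵢ` to `f` off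
their union. As the pieces are disjoint, the glued function is at distance
`∑ᵢ μ(Uᵢ) d(f↾Uᵢ, hᵢ)` from `f`, and this sum converges uniformly in `h`. Continuous open maps
pull comeager sets back to comeager sets.
-/

open MeasureTheory Set

/-- The Borel σ-algebra on the circle group `𝕋 ⊆ ℂ`. -/
noncomputable instance : MeasurableSpace Circle := borel Circle
instance : BorelSpace Circle := ⟨rfl⟩

/-- The metric `d(f,g) = ∫ |f − g| dν` inducing the topology of convergence in measure
on `L⁰(ν, 𝕋)`. -/
noncomputable def L0dist {Y : Type*} [MeasurableSpace Y] (ν : Measure Y)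
    (f g : Y →ₘ[ν] Circle) : ℝ :=
  ∫ x, ‖(f x : ℂ) - (g x : ℂ)‖ ∂ν

/-- The topology of convergence in measure on `L⁰(ν, 𝕋)`: the topology induced by the metric
`L0dist`, i.e. generated by the open balls of that metric. -/
noncomputable instance L0top {Y : Type*} [MeasurableSpace Y] (ν : Measure Y) :
    TopologicalSpace (Y →ₘ[ν] Circle) :=
  TopologicalSpace.generateFrom
    {U | ∃ (f : Y →ₘ[ν] Circle) (ε : ℝ), 0 < ε ∧ U = {g | L0dist ν f g < ε}}

/-- The normalized restriction `μ/μ(U)` of `μ` to `U`, as a (probability) measure on `U`. -/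
noncomputable def nres {X : Type*} [MeasurableSpace X] (μ : Measure X) (U : Set X) :
    Measure U :=
  (μ U)⁻¹ • μ.comap Subtype.val

/-- The inclusion `U → X` is quasi measure preserving from `μ/μ(U)` to `μ`. -/
theorem qmp_val {X : Type*} [MeasurableSpace X] (μ : Measure X) {U : Set X}
    (hU : MeasurableSet U) :
    Measure.QuasiMeasurePreserving (Subtype.val : U → X) (nres μ U) μ := by
  refine ⟨measurable_subtype_coe, ?_⟩
  rw [nres, Measure.map_smul,
    (MeasurableEmbedding.subtype_coe hU).map_comap, Subtype.range_coe]
  exact (Measure.absolutelyContinuous_of_le Measure.restrict_le_self).smul_left _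

/-- The restriction map `f ↦ f↾U` from `L⁰(μ,𝕋)` to `L⁰(U, μ/μ(U), 𝕋)`. -/
noncomputable def restrictL0 {X : Type*} [MeasurableSpace X] (μ : Measure X) {U : Set X}
    (hU : MeasurableSet U) (f : X →ₘ[μ] Circle) : U →ₘ[nres μ U] Circle :=
  f.compQuasiMeasurePreserving Subtype.val (qmp_val μ hU)

section Metric

lemma generateFrom_setOf_dist_lt {α : Type*} [PseudoMetricSpace α] :
    TopologicalSpace.generateFrom
      {V : Set α | ∃ (x : α) (ε : ℝ), 0 < ε ∧ V = {y | dist x y < ε}} =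
      UniformSpace.toTopologicalSpace := by
  refine (TopologicalSpace.isTopologicalBasis_of_isOpen_of_nhds ?_ ?_).eq_generateFrom.symm
  · rintro _ ⟨x, ε, -, rfl⟩
    exact isOpen_lt (continuous_const.dist continuous_id) continuous_const
  · intro x V hx hV
    obtain ⟨ε, hε, hball⟩ := Metric.isOpen_iff.1 hV x hx
    exact ⟨_, ⟨x, ε, hε, rfl⟩, (dist_self x).trans_lt hε,
      fun y hy => hball ((dist_comm y x).trans_lt hy)⟩

variable {Y : Type*} [MeasurableSpace Y]

lemma norm_circle_sub_le_two (z w : Circle) : ‖(z : ℂ) - w‖ ≤ 2 :=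
  (norm_sub_le (z : ℂ) w).trans_eq (by rw [z.norm_coe, w.norm_coe]; norm_num)

lemma integrable_norm_coe_sub (ν : Measure Y) [IsFiniteMeasure ν] (f g : Y →ₘ[ν] Circle) :
    Integrable (fun x => ‖(f x : ℂ) - g x‖) ν := by
  refine .of_bound ?_ 2 (.of_forall fun x => ?_)
  · exact ((continuous_subtype_val.comp_aestronglyMeasurable f.aestronglyMeasurable).sub
      (continuous_subtype_val.comp_aestronglyMeasurable g.aestronglyMeasurable)).norm
  · rw [norm_norm]
    exact norm_circle_sub_le_two _ _

lemma L0dist_nonneg (ν : Measure Y) (f g : Y →ₘ[ν] Circle) : 0 ≤ L0dist ν f g :=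
  integral_nonneg fun _ => norm_nonneg _

lemma L0dist_comm (ν : Measure Y) (f g : Y →ₘ[ν] Circle) : L0dist ν f g = L0dist ν g f := by
  simp only [L0dist, norm_sub_rev]

lemma L0dist_triangle (ν : Measure Y) [IsFiniteMeasure ν] (f g h : Y →ₘ[ν] Circle) :
    L0dist ν f h ≤ L0dist ν f g + L0dist ν g h := by
  have hfg := integrable_norm_coe_sub ν f g
  have hgh := integrable_norm_coe_sub ν g h
  rw [L0dist, L0dist, L0dist, ← integral_add hfg hgh]
  exact integral_mono (integrable_norm_coe_sub ν f h) (hfg.add hgh)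
    fun x => norm_sub_le_norm_sub_add_norm_sub _ _ _

lemma L0dist_eq_zero_iff (ν : Measure Y) [IsFiniteMeasure ν] {f g : Y →ₘ[ν] Circle} :
    L0dist ν f g = 0 ↔ f = g := by
  rw [L0dist, integral_eq_zero_iff_of_nonneg (fun _ => norm_nonneg _)
    (integrable_norm_coe_sub ν f g), AEEqFun.ext_iff]
  refine Filter.eventually_congr (.of_forall fun x => ?_)
  rw [Pi.zero_apply, norm_eq_zero, sub_eq_zero, Circle.coe_inj]

lemma L0dist_le (ν : Measure Y) [IsFiniteMeasure ν] (f g : Y →ₘ[ν] Circle) :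
    L0dist ν f g ≤ 2 * ν.real univ :=
  calc L0dist ν f g ≤ ∫ _, (2 : ℝ) ∂ν :=
        integral_mono (integrable_norm_coe_sub ν f g) (integrable_const 2)
          fun _ => norm_circle_sub_le_two _ _
    _ = 2 * ν.real univ := by rw [integral_const, smul_eq_mul, mul_comm]

/-- `L0dist` as a metric on `L⁰(ν, 𝕋)`, arranged so that its topology is definitionally `L0top`. -/
noncomputable instance L0metric (ν : Measure Y) [IsFiniteMeasure ν] :
    MetricSpace (Y →ₘ[ν] Circle) :=
  letI m : MetricSpace (Y →ₘ[ν] Circle) :=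
    { dist := L0dist ν
      dist_self := fun _ => (L0dist_eq_zero_iff ν).2 rfl
      dist_comm := L0dist_comm ν
      dist_triangle := L0dist_triangle ν
      eq_of_dist_eq_zero := (L0dist_eq_zero_iff ν).1 }
  m.replaceTopology generateFrom_setOf_dist_lt

lemma dist_eq_L0dist (ν : Measure Y) [IsFiniteMeasure ν] (f g : Y →ₘ[ν] Circle) :
    dist f g = L0dist ν f g := rfl

end Metric

section Restriction

variable {X : Type*} [MeasurableSpace X]

lemma nres_univ_le_one (μ : Measure X) (U : Set X) : nres μ U univ ≤ 1 :=
  calc nres μ U univ = (μ U)⁻¹ * μ.comap Subtype.val univ := rfl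
    _ ≤ (μ U)⁻¹ * μ (Subtype.val '' (univ : Set U)) := by
        gcongr
        exact Measure.comap_apply_le _ _ nullMeasurableSet_univ
    _ = (μ U)⁻¹ * μ U := by rw [image_univ, Subtype.range_coe]
    _ ≤ 1 := ENNReal.inv_mul_le_one _

instance isFiniteMeasure_nres (μ : Measure X) (U : Set X) : IsFiniteMeasure (nres μ U) :=
  ⟨(nres_univ_le_one μ U).trans_lt ENNReal.one_lt_top⟩

lemma L0dist_nres_le_two (μ : Measure X) {U : Set X} (f g : U →ₘ[nres μ U] Circle) :
    L0dist (nres μ U) f g ≤ 2 :=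
  have hmass : (nres μ U).real univ ≤ 1 :=
    ENNReal.toReal_mono ENNReal.one_ne_top (nres_univ_le_one μ U)
  (L0dist_le _ f g).trans (by linarith)

lemma integral_nres (μ : Measure X) {U : Set X} (hU : MeasurableSet U) (φ : X → ℝ) :
    ∫ x : U, φ x ∂nres μ U = (μ.real U)⁻¹ * ∫ x in U, φ x ∂μ := by
  rw [nres, integral_smul_measure, integral_subtype_comap hU φ, ENNReal.toReal_inv, smul_eq_mul,
    measureReal_def]

lemma coeFn_restrictL0 (μ : Measure X) {U : Set X} (hU : MeasurableSet U) (f : X →ₘ[μ] Circle) :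
    restrictL0 μ hU f =ᵐ[nres μ U] fun x => f x :=
  AEEqFun.coeFn_compQuasiMeasurePreserving f (qmp_val μ hU)

lemma L0dist_restrictL0 (μ : Measure X) {U : Set X} (hU : MeasurableSet U)
    (f g : X →ₘ[μ] Circle) :
    L0dist (nres μ U) (restrictL0 μ hU f) (restrictL0 μ hU g) =
      (μ.real U)⁻¹ * ∫ x in U, ‖(f x : ℂ) - g x‖ ∂μ := by
  rw [← integral_nres μ hU, L0dist]
  refine integral_congr_ae ?_
  filter_upwards [coeFn_restrictL0 μ hU f, coeFn_restrictL0 μ hU g] with x hf hg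
  rw [hf, hg]

lemma lipschitzWith_restrictL0 (μ : Measure X) [IsFiniteMeasure μ] {U : Set X}
    (hU : MeasurableSet U) : LipschitzWith (μ U).toNNReal⁻¹ (restrictL0 μ hU) := by
  refine .of_dist_le_mul fun f g => ?_
  calc L0dist (nres μ U) (restrictL0 μ hU f) (restrictL0 μ hU g)
      = (μ.real U)⁻¹ * ∫ x in U, ‖(f x : ℂ) - g x‖ ∂μ := L0dist_restrictL0 μ hU f g
    _ ≤ (μ.real U)⁻¹ * L0dist μ f g := by
        gcongr
        exact setIntegral_le_integral (integrable_norm_coe_sub μ f g)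
          (.of_forall fun _ => norm_nonneg _)

lemma measureReal_mul_L0dist_restrictL0 (μ : Measure X) [IsFiniteMeasure μ] {U : Set X}
    (hU : MeasurableSet U) (f g : X →ₘ[μ] Circle) :
    μ.real U * L0dist (nres μ U) (restrictL0 μ hU f) (restrictL0 μ hU g) =
      ∫ x in U, ‖(f x : ℂ) - g x‖ ∂μ := by
  rw [L0dist_restrictL0]
  rcases eq_or_ne (μ.real U) 0 with hzero | hne
  · rw [hzero, zero_mul, setIntegral_measure_zero _ ((measureReal_eq_zero_iff).1 hzero)]
  · exact mul_inv_cancel_left₀ hne _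

end Restriction

section Gluing

variable {X : Type*} [MeasurableSpace X] {ι : Type*} {U : ι → Set X}

lemma tsum_measure_ne_top (μ : Measure X) [IsFiniteMeasure μ] (hU : ∀ i, MeasurableSet (U i))
    (hdisj : Pairwise fun i j => Disjoint (U i) (U j)) : ∑' i, μ (U i) ≠ ⊤ :=
  ne_top_of_le_ne_top (measure_ne_top μ univ) <| tsum_measure_le_measure_univ
    (fun i => (hU i).nullMeasurableSet) (hdisj.mono fun _ _ h => h.aedisjoint)

lemma countable_of_measure_pos_of_pairwise_disjoint (μ : Measure X) [IsFiniteMeasure μ]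
    (hU : ∀ i, MeasurableSet (U i)) (hpos : ∀ i, 0 < μ (U i))
    (hdisj : Pairwise fun i j => Disjoint (U i) (U j)) : Countable ι := by
  have hsupp : Function.support (fun i => μ (U i)) = univ :=
    eq_univ_of_forall fun i => (hpos i).ne'
  exact countable_univ_iff.1
    (hsupp ▸ Summable.countable_support_ennreal (tsum_measure_ne_top μ hU hdisj))

lemma exists_measurable_eq_on_pieces {Z : Type*} [MeasurableSpace Z] [Countable ι]
    (hU : ∀ i, MeasurableSet (U i)) (hdisj : Pairwise fun i j => Disjoint (U i) (U j))
    {h : ∀ i, U i → Z} (hh : ∀ i, Measurable (h i)) {f : X → Z} (hf : Measurable f) :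
    ∃ g : X → Z, Measurable g ∧ (∀ i (x : U i), g x = h i x) ∧ ∀ x ∉ ⋃ i, U i, g x = f x := by
  have hcompat : ∀ i j (x : X) (hi : x ∈ U i) (hj : x ∈ U j), h i ⟨x, hi⟩ = h j ⟨x, hj⟩ := by
    intro i j x hi hj
    obtain rfl : i = j := hdisj.eq (not_disjoint_iff.2 ⟨x, hi, hj⟩)
    rfl
  let onUnion : (⋃ i, U i : Set X) → Z := iUnionLift U h hcompat _ subset_rfl
  have hval : MeasurableEmbedding (Subtype.val : (⋃ i, U i : Set X) → X) :=
    .subtype_coe (.iUnion hU)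
  refine ⟨Function.extend Subtype.val onUnion f,
    hval.measurable_extend (measurable_iUnionLift hcompat subset_rfl hU hh) hf, fun i x => ?_,
    fun x hx => Function.extend_apply' _ _ _ ?_⟩
  · exact (hval.injective.extend_apply onUnion f ⟨x, mem_iUnion_of_mem i x.2⟩).trans
      (iUnionLift_mk x _)
  · rintro ⟨y, rfl⟩
    exact hx y.2

lemma exists_restrictL0_eq [Countable ι] (μ : Measure X) (hU : ∀ i, MeasurableSet (U i))
    (hdisj : Pairwise fun i j => Disjoint (U i) (U j)) (f : X →ₘ[μ] Circle)
    (h : ∀ i, U i →ₘ[nres μ (U i)] Circle) :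
    ∃ g : X →ₘ[μ] Circle, (∀ i, restrictL0 μ (hU i) g = h i) ∧
      ∀ᵐ x ∂μ, x ∉ ⋃ i, U i → g x = f x := by
  obtain ⟨g, hg, hgh, hgf⟩ := exists_measurable_eq_on_pieces hU hdisj
    (fun i => (h i).stronglyMeasurable.measurable) f.stronglyMeasurable.measurable
  have hmk : AEEqFun.mk g hg.aestronglyMeasurable =ᵐ[μ] g := AEEqFun.coeFn_mk g _
  refine ⟨AEEqFun.mk g hg.aestronglyMeasurable, fun i => AEEqFun.ext ?_, ?_⟩
  · filter_upwards [coeFn_restrictL0 μ (hU i) (AEEqFun.mk g hg.aestronglyMeasurable),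
      (qmp_val μ (hU i)).ae hmk] with x hrestrict hx
    rw [hrestrict, hx, hgh]
  · filter_upwards [hmk] with x hx hxU
    rw [hx, hgf x hxU]

lemma L0dist_eq_tsum_restrictL0 [Countable ι] (μ : Measure X) [IsFiniteMeasure μ]
    (hU : ∀ i, MeasurableSet (U i)) (hdisj : Pairwise fun i j => Disjoint (U i) (U j))
    {f g : X →ₘ[μ] Circle} (hfg : ∀ᵐ x ∂μ, x ∉ ⋃ i, U i → f x = g x) :
    L0dist μ f g = ∑' i, μ.real (U i) *
      L0dist (nres μ (U i)) (restrictL0 μ (hU i) f) (restrictL0 μ (hU i) g) := by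
  simp only [measureReal_mul_L0dist_restrictL0]
  rw [← integral_iUnion hU hdisj (integrable_norm_coe_sub μ f g).integrableOn, L0dist,
    setIntegral_eq_integral_of_ae_compl_eq_zero]
  filter_upwards [hfg] with x hx hxU
  rw [hx hxU, sub_self, norm_zero]

lemma continuous_tsum_measureReal_mul_L0dist (μ : Measure X) [IsFiniteMeasure μ]
    (hU : ∀ i, MeasurableSet (U i)) (hdisj : Pairwise fun i j => Disjoint (U i) (U j))
    (h₀ : ∀ i, U i →ₘ[nres μ (U i)] Circle) :
    Continuous fun h : ∀ i, U i →ₘ[nres μ (U i)] Circle =>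
      ∑' i, μ.real (U i) * L0dist (nres μ (U i)) (h i) (h₀ i) := by
  have hsum : Summable fun i => μ.real (U i) * 2 :=
    (ENNReal.summable_toReal (tsum_measure_ne_top μ hU hdisj)).mul_right 2
  refine continuous_tsum (fun i => ?_) hsum fun i h => ?_
  · simp only [← dist_eq_L0dist]
    exact continuous_const.mul ((continuous_apply i).dist continuous_const)
  · rw [Real.norm_of_nonneg (mul_nonneg measureReal_nonneg (L0dist_nonneg _ _ _))]
    gcongr
    exact L0dist_nres_le_two μ _ _

lemma isOpenMap_restrictL0 [Countable ι] (μ : Measure X) [IsFiniteMeasure μ]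
    (hU : ∀ i, MeasurableSet (U i)) (hdisj : Pairwise fun i j => Disjoint (U i) (U j)) :
    IsOpenMap fun (f : X →ₘ[μ] Circle) i => restrictL0 μ (hU i) f := by
  refine .of_sections fun f => ?_
  choose glue hglue hglue_off using exists_restrictL0_eq μ hU hdisj f
  have hdist : ∀ h, dist (glue h) f =
      ∑' i, μ.real (U i) * L0dist (nres μ (U i)) (h i) (restrictL0 μ (hU i) f) := fun h => by
    simpa only [hglue, dist_eq_L0dist] using L0dist_eq_tsum_restrictL0 μ hU hdisj (hglue_off h)
  have hglue_self : glue (fun i => restrictL0 μ (hU i) f) = f := by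
    refine dist_eq_zero.1 ((hdist _).trans ?_)
    simp only [(L0dist_eq_zero_iff _).2, mul_zero, tsum_zero]
  refine ⟨glue, ?_, hglue_self, fun h => funext (hglue h)⟩
  rw [ContinuousAt, hglue_self, tendsto_iff_dist_tendsto_zero]
  simpa only [← hdist, hglue_self, dist_self] using
    (continuous_tsum_measureReal_mul_L0dist μ hU hdisj fun i => restrictL0 μ (hU i) f).tendsto
      fun i => restrictL0 μ (hU i) f

end Gluing

theorem statement10_general {X : Type*} [MeasurableSpace X] (μ : Measure X) [IsFiniteMeasure μ]
    {ι : Type*} (U : ι → Set X) (hU : ∀ i, MeasurableSet (U i)) (hpos : ∀ i, 0 < μ (U i))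
    (hdisj : Pairwise fun i j => Disjoint (U i) (U j)) :
    Continuous (fun (f : X →ₘ[μ] Circle) i => restrictL0 μ (hU i) f) ∧
    IsOpenMap (fun (f : X →ₘ[μ] Circle) i => restrictL0 μ (hU i) f) ∧
    ∀ S ∈ residual (∀ i, U i →ₘ[nres μ (U i)] Circle),
      (fun (f : X →ₘ[μ] Circle) i => restrictL0 μ (hU i) f) ⁻¹' S ∈ residual (X →ₘ[μ] Circle) := by
  have := countable_of_measure_pos_of_pairwise_disjoint μ hU hpos hdisj
  have hcont : Continuous fun (f : X →ₘ[μ] Circle) i => restrictL0 μ (hU i) f :=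
    continuous_pi fun i => (lipschitzWith_restrictL0 μ (hU i)).continuous
  have hopen := isOpenMap_restrictL0 μ hU hdisj
  exact ⟨hcont, hopen, fun S hS => tendsto_residual_of_isOpenMap hcont hopen hS⟩

/-- Let `(X,μ)` be a standard Borel space with a non-atomic Borel probability measure and
`U₁,…,U_N` pairwise disjoint Borel subsets of `X` of positive measure. Then the restriction
map `Ψ : L⁰(μ,𝕋) → ∏ᵢ L⁰(Uᵢ, μ/μ(Uᵢ), 𝕋)`, `Ψ(f) = (f↾U₁,…,f↾U_N)`, is continuous, open
and category preserving. -/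
theorem statement10 {X : Type*} [MeasurableSpace X] [StandardBorelSpace X]
    (μ : Measure X) [IsProbabilityMeasure μ] [NullSingletonClass μ]
    (N : ℕ) (U : Fin N → Set X) (hU : ∀ i, MeasurableSet (U i))
    (hpos : ∀ i, 0 < μ (U i))
    (hdisj : Pairwise fun i j => Disjoint (U i) (U j)) :
    Continuous (fun (f : X →ₘ[μ] Circle) (i : Fin N) => restrictL0 μ (hU i) f) ∧
    IsOpenMap (fun (f : X →ₘ[μ] Circle) (i : Fin N) => restrictL0 μ (hU i) f) ∧
    ∀ S : Set (∀ i : Fin N, ((U i) →ₘ[nres μ (U i)] Circle)),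
      S ∈ residual (∀ i : Fin N, ((U i) →ₘ[nres μ (U i)] Circle)) →
      (fun (f : X →ₘ[μ] Circle) (i : Fin N) => restrictL0 μ (hU i) f) ⁻¹' S ∈
        residual (X →ₘ[μ] Circle) :=
  statement10_general μ U hU hpos hdisj
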